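/- Let g belong to the disk algebra A(𝔻̄). Then the closure of the algebra ℂ[B,g] in A(𝔻̄) (with respect to the sup norm on the closed disk) contains Γ(g)·A(𝔻̄) = {Γ(g)·h : h ∈ A(𝔻̄)}. -/

import Mathlib

/-!
Write `p_u` for the monic polynomial of degree `n` in `w` whose roots are the solutions of
`B(w) = u`; its coefficients are affine in `u`.  If these roots are simple and `B(z) = u`,
interpolation over the fiber gives
`Γ(g)(z) h(z) = ∑_w h(w) / p_u'(w) * ∏_{w' ≠ w} (t - g(w'))` with `t = g(z)`,
because `p_u'(w) = ∏_{w' ≠ w} (w - w')` and the terms with `w ≠ z` contain the factor `t - g(z)`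
(`gamma_mul_eq_sum`).

When `g` and `h` inside the sum are replaced by polynomials `gq`, `hq`, the sum becomes a
polynomial `P(u, t)` (`exists_interp_poly`): the inner product is a resultant, hence polynomial in
`u`, `t`, `w`, and the weighted sum over the roots is the top coefficient of a remainder modulo
`p_u`, by Lagrange interpolation.  So `P(B, g)` belongs to `ℂ[B, g]`.

It remains to compare the two sums.  Polynomials are dense in the disk algebra
(`exists_polynomial_approx`), so `gq` and `hq` can be taken uniformly close to `g` and `h`.  Near
the unit circle the denominators `p_u'(w)` are bounded away from `0` (`exists_fiberDeriv_bound`):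
on the circle they do not vanish because `|B(rw)| ≤ r` forces `B' ≠ 0` there, and compactness does
the rest.  Thus `Γ(g) h - P(B, g)` is small near the circle, and by the maximum principle it is
small on the whole closed disk (`norm_le_of_near_circle`).
-/

open Complex Polynomial MeasureTheory Metric Set Filter Topology
open scoped Classical

noncomputable section

/-- The open unit disk in `ℂ`. -/
def uDisk : Set ℂ := Metric.ball 0 1

/-- The closed unit disk in `ℂ`. -/
def cDisk : Set ℂ := Metric.closedBall 0 1

/-- The finite Blaschke product with zero set `a 0, …, a (n-1)`:
`B(z) = ∏_j (a_j - z)/(1 - conj(a_j)·z)`. -/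
def blaschke {n : ℕ} (a : Fin n → ℂ) (z : ℂ) : ℂ :=
  ∏ j, (a j - z) / (1 - (starRingEnd ℂ) (a j) * z)

/-- The multiset of the `n` solutions (with multiplicity) `φ_0(z) = z, φ_1(z), …, φ_{n-1}(z)`
of `B(w) = B(z)`, realized as the roots of the polynomial equation
`∏_j (a_j - w) = B(z) · ∏_j (1 - conj(a_j)·w)`. -/
def fiberMS {n : ℕ} (a : Fin n → ℂ) (z : ℂ) : Multiset ℂ :=
  ((∏ j, (Polynomial.C (a j) - Polynomial.X)) -
    Polynomial.C (blaschke a z) *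
      ∏ j, (1 - Polynomial.C ((starRingEnd ℂ) (a j)) * Polynomial.X)).roots

/-- `𝒟(f)(z) = ∏_{j=1}^{n-1} (f(z) - f(φ_j(z)))`, where `φ_1(z), …, φ_{n-1}(z)` is the
fiber of `B` over `B(z)` with one copy of `z` removed.  In particular
`calD a id z = ∏_{j=1}^{n-1} (z - φ_j(z))`. -/
def calD {n : ℕ} (a : Fin n → ℂ) (f : ℂ → ℂ) (z : ℂ) : ℂ :=
  (((fiberMS a z).erase z).map (fun w => f z - f w)).prod

/-- `G` is (the holomorphic extension after removing singularities of) `Γ(f) = 𝒟(f)/𝒟`. -/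
def IsGamma {n : ℕ} (a : Fin n → ℂ) (f G : ℂ → ℂ) : Prop :=
  DifferentiableOn ℂ G uDisk ∧ ∀ z ∈ uDisk, G z * calD a id z = calD a f z

/-- `p`-th power integral mean of `f` on the circle of radius `r`. -/
def circMean (p : ℝ) (f : ℂ → ℂ) (r : ℝ) : ℝ :=
  ∫ θ in (0:ℝ)..(2 * Real.pi), ‖f ((r : ℂ) * Complex.exp ((θ : ℂ) * Complex.I))‖ ^ p

/-- The `H^p` norm of `f` (for `0 < p < ∞`). -/
def hpNorm (p : ℝ) (f : ℂ → ℂ) : ℝ :=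
  (sSup {m : ℝ | ∃ r ∈ Set.Ico (0:ℝ) 1, m = circMean p f r}) ^ (1 / p)

/-- Membership in the Hardy space `H^p`, `0 < p < ∞`: holomorphic on the disk with
uniformly bounded integral means. -/
def MemHp (p : ℝ) (f : ℂ → ℂ) : Prop :=
  DifferentiableOn ℂ f uDisk ∧ ∃ C : ℝ, ∀ r ∈ Set.Ico (0:ℝ) 1, circMean p f r ≤ C

/-- Membership in `H^∞`: bounded holomorphic functions on the disk. -/
def MemHinf (f : ℂ → ℂ) : Prop :=
  DifferentiableOn ℂ f uDisk ∧ ∃ C : ℝ, ∀ z ∈ uDisk, ‖f z‖ ≤ C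

/-- The `H^∞` (sup) norm. -/
def hinfNorm (f : ℂ → ℂ) : ℝ := sSup {m : ℝ | ∃ z ∈ uDisk, m = ‖f z‖}

/-- The algebra of all polynomials in the functions `F 0, …, F (m-1)`. -/
def algGen (m : ℕ) (F : Fin m → (ℂ → ℂ)) : Set (ℂ → ℂ) :=
  {h | ∃ P : MvPolynomial (Fin m) ℂ, ∀ z : ℂ, h z = MvPolynomial.eval (fun i => F i z) P}

/-- The algebra `ℂ[F,G]` of all polynomials in the two functions `F` and `G`. -/
def algGen2 (F G : ℂ → ℂ) : Set (ℂ → ℂ) := algGen 2 ![F, G]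

/-- The (sequential) closure of `S` in `H^p`. -/
def hpClosure (p : ℝ) (S : Set (ℂ → ℂ)) : Set (ℂ → ℂ) :=
  {f | MemHp p f ∧ ∃ u : ℕ → (ℂ → ℂ), (∀ k, u k ∈ S) ∧
    Filter.Tendsto (fun k => hpNorm p (fun z => f z - u k z)) Filter.atTop (nhds 0)}

/-- `S` has finite codimension in `H^p`: finitely many functions in `H^p` together with `S`
span all of `H^p`. -/
def FiniteCodimHp (p : ℝ) (S : Set (ℂ → ℂ)) : Prop :=
  ∃ (k : ℕ) (e : Fin k → (ℂ → ℂ)), (∀ i, MemHp p (e i)) ∧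
    ∀ f, MemHp p f → ∃ (c : Fin k → ℂ) (s : ℂ → ℂ), s ∈ S ∧
      ∀ z ∈ uDisk, f z = s z + ∑ i, c i * e i z

/-- Inner function: bounded by 1, holomorphic, radial limits of modulus 1 a.e. -/
def IsInner (f : ℂ → ℂ) : Prop :=
  DifferentiableOn ℂ f uDisk ∧ (∀ z ∈ uDisk, ‖f z‖ ≤ 1) ∧
  ∀ᵐ θ : ℝ ∂volume, ∃ l : ℂ, ‖l‖ = 1 ∧
    Filter.Tendsto (fun r : ℝ => f ((r : ℂ) * Complex.exp ((θ : ℂ) * Complex.I)))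
      (nhdsWithin 1 (Set.Iio 1)) (nhds l)

/-- `J` divides `h`, with a quotient holomorphic on the disk. -/
def InnerDivides (J h : ℂ → ℂ) : Prop :=
  ∃ k : ℂ → ℂ, DifferentiableOn ℂ k uDisk ∧ ∀ z ∈ uDisk, h z = J z * k z

/-- Outer function: a holomorphic function on the disk whose only inner divisors are
unimodular constants (i.e. whose inner part is a unimodular constant). -/
def IsOuter (h : ℂ → ℂ) : Prop :=
  DifferentiableOn ℂ h uDisk ∧
  ∀ J : ℂ → ℂ, IsInner J → InnerDivides J h →
    ∃ c : ℂ, ‖c‖ = 1 ∧ ∀ z ∈ uDisk, J z = c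

/-- `I` is the inner part of `h`: `I` is inner and `h = I·F` with `F` outer. -/
def IsInnerPartOf (I h : ℂ → ℂ) : Prop :=
  IsInner I ∧ ∃ F : ℂ → ℂ, IsOuter F ∧ ∀ z ∈ uDisk, h z = I z * F z

/-- Finite Blaschke product (up to a unimodular constant factor). -/
def IsFiniteBlaschke (f : ℂ → ℂ) : Prop :=
  ∃ (m : ℕ) (c : ℂ) (b : Fin m → ℂ), ‖c‖ = 1 ∧ (∀ i, b i ∈ uDisk) ∧
    ∀ z ∈ uDisk, f z = c * ∏ i, (b i - z) / (1 - (starRingEnd ℂ) (b i) * z)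

/-- `h` has no singular inner factor: every zero-free inner divisor of `h` is a
unimodular constant. -/
def NoSingularInnerFactor (h : ℂ → ℂ) : Prop :=
  ∀ J : ℂ → ℂ, IsInner J → (∀ z ∈ uDisk, J z ≠ 0) → InnerDivides J h →
    ∃ c : ℂ, ‖c‖ = 1 ∧ ∀ z ∈ uDisk, J z = c

/-- The disk algebra `A(𝔻̄)`: continuous on the closed disk, holomorphic on the open disk. -/
def MemDiskAlg (f : ℂ → ℂ) : Prop :=
  ContinuousOn f cDisk ∧ DifferentiableOn ℂ f uDisk

/-- The closure of `S` in the disk algebra, with respect to the sup norm on `𝔻̄`. -/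
def daClosure (S : Set (ℂ → ℂ)) : Set (ℂ → ℂ) :=
  {f | MemDiskAlg f ∧ ∀ ε : ℝ, 0 < ε → ∃ h ∈ S, ∀ z ∈ cDisk, ‖f z - h z‖ ≤ ε}

/-- `S` has finite codimension in the disk algebra `A(𝔻̄)`. -/
def FiniteCodimDA (S : Set (ℂ → ℂ)) : Prop :=
  ∃ (k : ℕ) (e : Fin k → (ℂ → ℂ)), (∀ i, MemDiskAlg (e i)) ∧
    ∀ f, MemDiskAlg f → ∃ (c : Fin k → ℂ) (s : ℂ → ℂ), s ∈ S ∧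
      ∀ z ∈ cDisk, f z = s z + ∑ i, c i * e i z


/-! ### Fiber polynomials and the interpolation sum -/

/-- The polynomial `∏_j (X - c_j) - u ∏_j (1 - d_j X)` over an arbitrary commutative ring.  With
`d_j = conj(c_j)` and `u = (-1)^n B(z)` its roots are the fiber of `B` through `z`; keeping the
coefficient ring general allows `u` to be an indeterminate. -/
def fiberPoly {R : Type*} [CommRing R] {n : ℕ} (c d : Fin n → R) (u : R) : R[X] :=
  ∏ j, (X - C (c j)) - C u * ∏ j, (1 - C (d j) * X)

theorem fiberPoly_map {R S : Type*} [CommRing R] [CommRing S] (φ : R →+* S) {n : ℕ}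
    (c d : Fin n → R) (u : R) :
    (fiberPoly c d u).map φ = fiberPoly (fun j => φ (c j)) (fun j => φ (d j)) (φ u) := by
  simp [fiberPoly, Polynomial.map_prod]

/-- The condition `d_0 = 0` (that is, `a_1 = 0`) keeps the second product of degree `< n`. -/
theorem fiberPoly_monic {R : Type*} [CommRing R] [Nontrivial R] {k : ℕ} (c d : Fin (k + 1) → R)
    (u : R) (h0 : d 0 = 0) :
    (fiberPoly c d u).Monic ∧ (fiberPoly c d u).natDegree = k + 1 := by
  have hN : (∏ j, (X - C (c j))).Monic := monic_prod_of_monic _ _ fun j _ => monic_X_sub_C _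
  have hNd : (∏ j, (X - C (c j))).natDegree = k + 1 := by
    rw [natDegree_prod_of_monic _ _ fun j _ => monic_X_sub_C _]; simp
  have hM : (C u * ∏ j, (1 - C (d j) * X)).natDegree ≤ k := by
    refine (natDegree_C_mul_le _ _).trans ?_
    rw [Fin.prod_univ_succ, h0]
    simp only [map_zero, zero_mul, sub_zero, one_mul]
    refine (natDegree_prod_le _ _).trans ?_
    refine (Finset.sum_le_card_nsmul _ _ 1 fun i _ => ?_).trans (by simp)
    refine (natDegree_sub_le _ _).trans ?_
    simp only [natDegree_one, zero_le, max_eq_right]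
    exact (natDegree_C_mul_le _ _).trans natDegree_X_le
  have hdeg : (C u * ∏ j, (1 - C (d j) * X)).degree < (∏ j, (X - C (c j))).degree := by
    refine degree_lt_degree ?_
    omega
  refine ⟨hN.sub_of_left hdeg, ?_⟩
  rw [fiberPoly, natDegree_sub_eq_left_of_natDegree_lt (by omega), hNd]

/-- Lagrange interpolation: the top coefficient of the remainder of `F` modulo a separable `p` is
the divided difference of `F` at the roots of `p`. -/
theorem coeff_modByMonic_eq_sum (p F : ℂ[X]) (hp : p.Monic) {k : ℕ} (hk : p.natDegree = k + 1)
    (hnd : p.roots.Nodup) :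
    (F %ₘ p).coeff k = ∑ w ∈ p.roots.toFinset, F.eval w / p.derivative.eval w := by
  have hs : p.Splits := IsAlgClosed.splits p
  have hcard : p.roots.toFinset.card = k + 1 := by
    rw [Multiset.toFinset_card_of_nodup hnd, ← hk, ← hs.natDegree_eq_card_roots]
  have hdeg : (F %ₘ p).degree < p.roots.toFinset.card := by
    refine (degree_modByMonic_lt F hp).trans_le ?_
    rw [hcard, ← hk]; exact degree_le_natDegree
  have := Lagrange.coeff_eq_sum (s := p.roots.toFinset) (v := id) (fun _ _ _ _ h => h) hdeg
  rw [hcard, Nat.add_sub_cancel] at this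
  rw [this]
  refine Finset.sum_congr rfl fun w hw => ?_
  have hw' : w ∈ p.roots := by simpa using hw
  have hwr : p.IsRoot w := isRoot_of_mem_roots hw'
  congr 1
  · conv_rhs => rw [← modByMonic_add_div F p]
    simp [hwr.eq_zero]
  · rw [hs.eval_root_derivative hp hw', Finset.prod, Finset.erase_val, Multiset.toFinset_val,
      hnd.dedup]
    rfl

/-- The product of `t - g(w')` over the roots `w'` of `p` other than `w`, computed as a resultant so
that it is polynomial in all data: it is the value at `w` of an element of `S[X]`, where `S` is any
ring over which `p` and `t` are defined. -/
theorem exists_prod_erase {S : Type*} [CommRing S] [Nontrivial S] (p G : S[X]) (hp : p.Monic)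
    {k : ℕ} (hk : p.natDegree = k + 1) :
    ∃ r : S[X], ∀ (φ : S →+* ℂ) (w : ℂ), (p.map φ).IsRoot w →
      (r.map φ).eval w = (((p.map φ).roots.erase w).map fun w' => (G.map φ).eval w').prod := by
  refine ⟨resultant (p.map C /ₘ (X - C X)) (G.map C) k G.natDegree, fun φ w hw => ?_⟩
  set ψ : S[X] →+* ℂ := eval₂RingHom φ w with hψ
  have hψC : ψ.comp C = φ := by ext; simp [hψ]
  have hpm : (p.map φ).Monic := hp.map φ
  have hdeg : (p.map φ).natDegree = k + 1 := by rw [hp.natDegree_map, hk]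
  set q : ℂ[X] := p.map φ /ₘ (X - C w) with hq
  have hfac : (X - C w) * q = p.map φ := mul_divByMonic_eq_iff_isRoot.2 hw
  have hqm : q.Monic := (monic_X_sub_C w).of_mul_monic_left (by rw [hfac]; exact hpm)
  have hqd : q.natDegree = k := by
    rw [hq, natDegree_divByMonic _ (monic_X_sub_C w), hdeg]; simp
  have hroots : (p.map φ).roots.erase w = q.roots := by
    rw [← hfac, roots_mul (by rw [hfac]; exact hpm.ne_zero), roots_X_sub_C]; simp
  have h1 : (p.map C /ₘ (X - C X)).map ψ = q := by
    rw [map_divByMonic _ (monic_X_sub_C _), Polynomial.map_map, hψC, hq]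
    simp [hψ]
  have h2 : (G.map C).map ψ = G.map φ := by rw [Polynomial.map_map, hψC]
  have h3 : ∀ r : S[X], (r.map φ).eval w = ψ r := fun r => by simp [hψ, eval_map]
  rw [h3, ← resultant_map_map, h1, h2, hroots]
  have := resultant_eq_prod_eval q (G.map φ) G.natDegree natDegree_map_le (IsAlgClosed.splits q)
  rw [hqd, hqm.leadingCoeff, one_pow, one_mul] at this
  exact this

/-- The interpolation sum is a polynomial in `u` and `t`. -/
theorem exists_interp_poly {k : ℕ} (c d : Fin (k + 1) → ℂ) (h0 : d 0 = 0) (e : ℂ) (gq hq : ℂ[X]) :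
    ∃ P : MvPolynomial (Fin 2) ℂ, ∀ x : Fin 2 → ℂ, (fiberPoly c d (e * x 0)).roots.Nodup →
      MvPolynomial.eval x P = ∑ w ∈ (fiberPoly c d (e * x 0)).roots.toFinset,
        hq.eval w * (((fiberPoly c d (e * x 0)).roots.erase w).map
          fun w' => x 1 - gq.eval w').prod / (fiberPoly c d (e * x 0)).derivative.eval w := by
  set p : (MvPolynomial (Fin 2) ℂ)[X] := fiberPoly (fun j => MvPolynomial.C (c j))
    (fun j => MvPolynomial.C (d j)) (MvPolynomial.C e * MvPolynomial.X 0) with hp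
  obtain ⟨hpm, hpd⟩ : p.Monic ∧ p.natDegree = k + 1 := fiberPoly_monic _ _ _ (by simp [h0])
  obtain ⟨r, hr⟩ := exists_prod_erase p (C (MvPolynomial.X 1) - gq.map MvPolynomial.C) hpm hpd
  refine ⟨((hq.map MvPolynomial.C * r) %ₘ p).coeff k, fun x hnd => ?_⟩
  have hpφ : p.map (MvPolynomial.eval x) = fiberPoly c d (e * x 0) := by
    rw [hp, fiberPoly_map]; simp
  have hcomp : (MvPolynomial.eval x).comp MvPolynomial.C = RingHom.id ℂ := by ext; simp
  rw [← coeff_map, map_modByMonic _ hpm, hpφ]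
  have hm := fiberPoly_monic c d (e * x 0) h0
  rw [coeff_modByMonic_eq_sum _ _ hm.1 hm.2 hnd]
  refine Finset.sum_congr rfl fun w hw => ?_
  have hw' : (p.map (MvPolynomial.eval x)).IsRoot w := by
    rw [hpφ]; exact isRoot_of_mem_roots (by simpa using hw)
  rw [Polynomial.map_mul, eval_mul, hr _ _ hw', hpφ, Polynomial.map_map, hcomp, Polynomial.map_id]
  simp [Polynomial.map_map, hcomp]

/-! ### Blaschke products and their fibers -/

theorem fiberMS_eq {n : ℕ} (a : Fin n → ℂ) (z : ℂ) :
    fiberMS a z = (fiberPoly a (fun j => (starRingEnd ℂ) (a j)) ((-1) ^ n * blaschke a z)).roots := by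
  have h1 : ∏ j, (C (a j) - X) = C ((-1) ^ n) * ∏ j, (X - C (a j)) := by
    have : ∀ j, C (a j) - X = (-1) * (X - C (a j)) := fun j => by ring
    simp only [this, Finset.prod_mul_distrib]
    simp
  have h2 : ((-1 : ℂ) ^ n) * (-1) ^ n = 1 := by rw [← mul_pow]; simp
  have h3 : (∏ j, (C (a j) - X)) - C (blaschke a z) *
      ∏ j, (1 - C ((starRingEnd ℂ) (a j)) * X) = C ((-1) ^ n) *
      fiberPoly a (fun j => (starRingEnd ℂ) (a j)) ((-1) ^ n * blaschke a z) := by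
    rw [fiberPoly, h1, mul_sub, ← mul_assoc (C _) (C _), ← C_mul, ← mul_assoc, h2, one_mul]
  rw [fiberMS, h3, roots_C_mul _ (pow_ne_zero _ (by norm_num))]

theorem fiberPoly_eval {n : ℕ} (a : Fin n → ℂ) (u w : ℂ) :
    (fiberPoly a (fun j => (starRingEnd ℂ) (a j)) ((-1) ^ n * u)).eval w =
      (-1) ^ n * (∏ j, (a j - w) - u * ∏ j, (1 - (starRingEnd ℂ) (a j) * w)) := by
  have h1 : ∏ j, (w - a j) = (-1) ^ n * ∏ j, (a j - w) := by
    have : ∀ j, w - a j = (-1) * (a j - w) := fun j => by ring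
    simp only [this, Finset.prod_mul_distrib]
    simp
  simp only [fiberPoly, eval_sub, eval_mul, eval_prod, eval_C, eval_X, eval_one, h1]
  ring

theorem blaschke_eq_div {n : ℕ} (a : Fin n → ℂ) (z : ℂ) :
    blaschke a z = (∏ j, (a j - z)) / ∏ j, (1 - (starRingEnd ℂ) (a j) * z) := by
  rw [blaschke, Finset.prod_div_distrib]

theorem normSq_factor (a z : ℂ) : ‖1 - (starRingEnd ℂ) a * z‖ ^ 2 - ‖a - z‖ ^ 2 =
    (1 - ‖a‖ ^ 2) * (1 - ‖z‖ ^ 2) := by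
  simp only [← Complex.normSq_eq_norm_sq, Complex.normSq_apply]
  simp
  ring

theorem norm_factor_le {a z : ℂ} (ha : ‖a‖ < 1) (hz : ‖z‖ ≤ 1) :
    ‖a - z‖ ≤ ‖1 - (starRingEnd ℂ) a * z‖ := by
  have h := normSq_factor a z
  have h1 : 0 ≤ 1 - ‖a‖ ^ 2 := by nlinarith [norm_nonneg a]
  have h2 : 0 ≤ 1 - ‖z‖ ^ 2 := by nlinarith [norm_nonneg z]
  exact le_of_sq_le_sq (by nlinarith [mul_nonneg h1 h2]) (norm_nonneg _)

theorem norm_factor_ge {a z : ℂ} (ha : ‖a‖ < 1) (hz : 1 ≤ ‖z‖) :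
    ‖1 - (starRingEnd ℂ) a * z‖ ≤ ‖a - z‖ := by
  have h := normSq_factor a z
  have h1 : 0 ≤ 1 - ‖a‖ ^ 2 := by nlinarith [norm_nonneg a]
  have h2 : 0 ≤ ‖z‖ ^ 2 - 1 := by nlinarith [norm_nonneg z]
  exact le_of_sq_le_sq (by nlinarith [mul_nonneg h1 h2]) (norm_nonneg _)

theorem norm_denom_ge {a z : ℂ} (hz : ‖z‖ ≤ 1) :
    1 - ‖a‖ ≤ ‖1 - (starRingEnd ℂ) a * z‖ := by
  have h1 : ‖(starRingEnd ℂ) a * z‖ ≤ ‖a‖ := by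
    rw [norm_mul, RCLike.norm_conj]
    exact mul_le_of_le_one_right (norm_nonneg _) hz
  have h2 := norm_sub_norm_le (1 : ℂ) ((starRingEnd ℂ) a * z)
  rw [norm_one] at h2
  linarith

theorem denom_ne_zero {a z : ℂ} (ha : ‖a‖ < 1) (hz : ‖z‖ ≤ 1) :
    1 - (starRingEnd ℂ) a * z ≠ 0 := by
  rw [← norm_pos_iff]
  linarith [norm_denom_ge (a := a) hz]

theorem prod_denom_ne_zero {n : ℕ} {a : Fin n → ℂ} {z : ℂ} (ha : ∀ j, ‖a j‖ < 1) (hz : ‖z‖ ≤ 1) :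
    ∏ j, (1 - (starRingEnd ℂ) (a j) * z) ≠ 0 :=
  Finset.prod_ne_zero_iff.2 fun j _ => denom_ne_zero (ha j) hz

/-- Since `a_1 = 0`, one of the Blaschke factors is `-z`. -/
theorem norm_blaschke_le {k : ℕ} {a : Fin (k + 1) → ℂ} {z : ℂ} (ha : ∀ j, ‖a j‖ < 1) (h0 : a 0 = 0)
    (hz : ‖z‖ ≤ 1) : ‖blaschke a z‖ ≤ ‖z‖ := by
  rw [blaschke, norm_prod, Fin.prod_univ_succ, h0]
  simp only [zero_sub, map_zero, zero_mul, sub_zero, div_one, norm_neg]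
  refine mul_le_of_le_one_right (norm_nonneg _) (Finset.prod_le_one (fun _ _ => norm_nonneg _) ?_)
  intro j _
  rw [norm_div]
  exact div_le_one_of_le₀ (norm_factor_le (ha _) hz) (norm_nonneg _)

theorem norm_blaschke_circle {n : ℕ} {a : Fin n → ℂ} {z : ℂ} (ha : ∀ j, ‖a j‖ < 1)
    (hz : ‖z‖ = 1) : ‖blaschke a z‖ = 1 := by
  rw [blaschke, norm_prod]
  refine Finset.prod_eq_one fun j _ => ?_
  rw [norm_div, le_antisymm (norm_factor_le (ha j) hz.le) (norm_factor_ge (ha j) hz.ge)]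
  exact div_self (norm_ne_zero_iff.2 (denom_ne_zero (ha j) hz.le))

theorem memDiskAlg_blaschke {n : ℕ} {a : Fin n → ℂ} (ha : ∀ j, ‖a j‖ < 1) :
    MemDiskAlg (blaschke a) := by
  have : ∀ z, ‖z‖ ≤ 1 → DifferentiableAt ℂ (blaschke a) z := by
    intro z hz
    unfold blaschke
    refine DifferentiableAt.fun_finsetProd fun j _ => ?_
    exact ((differentiableAt_const _).sub differentiableAt_id).div
      ((differentiableAt_const _).sub ((differentiableAt_const _).mul differentiableAt_id))
      (denom_ne_zero (ha j) hz)
  refine ⟨fun z hz => (this z (by simpa [cDisk] using hz)).continuousAt.continuousWithinAt,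
    fun z hz => (this z ?_).differentiableWithinAt⟩
  have : ‖z‖ < 1 := by simpa [uDisk] using hz
  exact this.le

/-- The fiber over a point of the open disk lies in the open disk. -/
theorem root_mem {n : ℕ} {a : Fin n → ℂ} {u w : ℂ} (ha : ∀ j, ‖a j‖ < 1) (hu : ‖u‖ < 1)
    (hw : (fiberPoly a (fun j => (starRingEnd ℂ) (a j)) ((-1) ^ n * u)).IsRoot w) :
    ‖w‖ < 1 ∧ blaschke a w = u := by
  have h1 : ∏ j, (a j - w) = u * ∏ j, (1 - (starRingEnd ℂ) (a j) * w) := by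
    have := hw.eq_zero
    rw [fiberPoly_eval] at this
    rcases mul_eq_zero.1 this with h | h
    · exact absurd h (pow_ne_zero _ (by norm_num))
    · exact sub_eq_zero.1 h
  have hlt : ‖w‖ < 1 := by
    by_contra! hw1
    have hN : 0 < ‖∏ j, (a j - w)‖ := by
      rw [norm_pos_iff, Finset.prod_ne_zero_iff]
      intro j _ h
      have := ha j
      rw [sub_eq_zero.1 h] at this
      linarith
    have hle : ‖∏ j, (1 - (starRingEnd ℂ) (a j) * w)‖ ≤ ‖∏ j, (a j - w)‖ := by
      rw [norm_prod, norm_prod]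
      exact Finset.prod_le_prod (fun _ _ => norm_nonneg _) fun j _ => norm_factor_ge (ha j) hw1
    have heq : ‖∏ j, (a j - w)‖ = ‖u‖ * ‖∏ j, (1 - (starRingEnd ℂ) (a j) * w)‖ := by
      rw [h1, norm_mul]
    nlinarith [norm_nonneg u]
  refine ⟨hlt, ?_⟩
  rw [blaschke_eq_div, h1, mul_div_cancel_right₀ _ (prod_denom_ne_zero ha hlt.le)]

theorem isRoot_self {n : ℕ} {a : Fin n → ℂ} {z : ℂ} (ha : ∀ j, ‖a j‖ < 1) (hz : ‖z‖ ≤ 1) :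
    (fiberPoly a (fun j => (starRingEnd ℂ) (a j)) ((-1) ^ n * blaschke a z)).IsRoot z := by
  rw [IsRoot, fiberPoly_eval, blaschke_eq_div, div_mul_cancel₀ _ (prod_denom_ne_zero ha hz)]
  simp

/-- The derivative at `w` of the polynomial whose roots are the fiber through `w`; it equals
`∏ (w - w')` over the other points of that fiber. -/
def fiberDeriv {n : ℕ} (a : Fin n → ℂ) (w : ℂ) : ℂ :=
  (fiberPoly a (fun j => (starRingEnd ℂ) (a j)) ((-1) ^ n * blaschke a w)).derivative.eval w

theorem continuousOn_fiberDeriv {n : ℕ} {a : Fin n → ℂ} (ha : ∀ j, ‖a j‖ < 1) :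
    ContinuousOn (fiberDeriv a) cDisk := by
  have hB := (memDiskAlg_blaschke ha).1
  unfold fiberDeriv fiberPoly
  simp only [derivative_sub, derivative_C_mul, eval_sub, eval_mul, eval_C]
  exact (Polynomial.continuous _).continuousOn.sub
    ((continuousOn_const.mul hB).mul (Polynomial.continuous _).continuousOn)

/-- On the unit circle `|B(rw) - B(w)| ≥ 1 - r` because `|B(rw)| ≤ r`, so that points of the
circle are simple points of their fibers. -/
theorem fiberDeriv_ne_zero {k : ℕ} {a : Fin (k + 1) → ℂ} {w : ℂ} (ha : ∀ j, ‖a j‖ < 1)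
    (h0 : a 0 = 0) (hw : ‖w‖ = 1) : fiberDeriv a w ≠ 0 := by
  intro hd
  set P := fiberPoly a (fun j => (starRingEnd ℂ) (a j)) ((-1) ^ (k + 1) * blaschke a w) with hP
  have hder : HasDerivAt (fun x => P.eval x) 0 w := by
    have := P.hasDerivAt w
    rwa [show P.derivative.eval w = 0 from hd] at this
  set m : ℝ := ∏ j, (1 - ‖a j‖) with hm
  have hm0 : 0 < m := Finset.prod_pos fun j _ => by linarith [ha j]
  have hP0 : P.eval w = 0 := isRoot_self ha hw.le
  have hlo := (hasDerivAt_iff_isLittleO.1 hder).def (half_pos hm0)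
  have htend : Tendsto (fun r : ℝ => (r : ℂ) * w) (𝓝[<] 1) (𝓝 w) := by
    have : Continuous fun r : ℝ => (r : ℂ) * w := by fun_prop
    have h := this.tendsto 1
    simp only [ofReal_one, one_mul] at h
    exact h.mono_left nhdsWithin_le_nhds
  have hI : ∀ᶠ r : ℝ in 𝓝[<] 1, r ∈ Ioo (0 : ℝ) 1 := Ioo_mem_nhdsLT (by norm_num)
  obtain ⟨r, h1, hr0, hr1⟩ := ((htend.eventually hlo).and hI).exists
  have hnr : ‖(r : ℂ) * w‖ = r := by
    rw [norm_mul, hw, mul_one, Complex.norm_real, Real.norm_of_nonneg hr0.le]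
  have hsub : ‖(r : ℂ) * w - w‖ = 1 - r := by
    rw [show (r : ℂ) * w - w = ((r - 1 : ℝ) : ℂ) * w by push_cast; ring, norm_mul, hw, mul_one,
      Complex.norm_real, Real.norm_of_nonpos (by linarith)]
    ring
  have hden : ∏ j, (1 - (starRingEnd ℂ) (a j) * ((r : ℂ) * w)) ≠ 0 :=
    prod_denom_ne_zero ha (by rw [hnr]; exact hr1.le)
  have hmle : m ≤ ‖∏ j, (1 - (starRingEnd ℂ) (a j) * ((r : ℂ) * w))‖ := by
    rw [norm_prod]
    exact Finset.prod_le_prod (fun j _ => by linarith [ha j]) fun j _ =>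
      norm_denom_ge (by rw [hnr]; exact hr1.le)
  have hval : P.eval ((r : ℂ) * w) = (-1) ^ (k + 1) *
      ((blaschke a (r * w) - blaschke a w) *
        ∏ j, (1 - (starRingEnd ℂ) (a j) * ((r : ℂ) * w))) := by
    rw [hP, fiberPoly_eval, sub_mul, blaschke_eq_div a (r * w), div_mul_cancel₀ _ hden]
  have hdiff : 1 - r ≤ ‖blaschke a (r * w) - blaschke a w‖ := by
    have e1 := norm_sub_norm_le (blaschke a w) (blaschke a (r * w))
    have e2 := norm_blaschke_le ha h0 (z := r * w) (by rw [hnr]; exact hr1.le)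
    rw [norm_blaschke_circle ha hw, norm_sub_rev] at e1
    rw [hnr] at e2
    linarith
  simp only [hP0, sub_zero, smul_zero, hsub] at h1
  rw [hval, norm_mul, norm_mul, norm_pow, norm_neg, norm_one, one_pow, one_mul] at h1
  have := mul_le_mul hdiff hmle hm0.le (norm_nonneg _)
  nlinarith

/-- Fibers over points close to the unit circle are uniformly separated. -/
theorem exists_fiberDeriv_bound {k : ℕ} {a : Fin (k + 1) → ℂ} (ha : ∀ j, ‖a j‖ < 1)
    (h0 : a 0 = 0) : ∃ η < 1, ∃ δ > 0, ∀ w, ‖w‖ ≤ 1 → η < ‖blaschke a w‖ →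
      δ ≤ ‖fiberDeriv a w‖ := by
  have hc := (continuousOn_fiberDeriv ha).norm
  have hsub : sphere (0 : ℂ) 1 ⊆ cDisk := sphere_subset_closedBall
  obtain ⟨w₁, hw₁, hmin⟩ := (isCompact_sphere (0 : ℂ) 1).exists_isMinOn
    (NormedSpace.sphere_nonempty.2 zero_le_one) (hc.mono hsub)
  have hpos : 0 < ‖fiberDeriv a w₁‖ :=
    norm_pos_iff.2 (fiberDeriv_ne_zero ha h0 (by simpa using hw₁))
  set δ := ‖fiberDeriv a w₁‖ / 2 with hδ
  have hE : IsCompact (cDisk ∩ (fun w => ‖fiberDeriv a w‖) ⁻¹' Iic δ) :=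
    (isCompact_closedBall (0 : ℂ) 1).of_isClosed_subset
      (hc.preimage_isClosed_of_isClosed isClosed_closedBall isClosed_Iic) inter_subset_left
  rcases (cDisk ∩ (fun w => ‖fiberDeriv a w‖) ⁻¹' Iic δ).eq_empty_or_nonempty with hemp | hne
  · refine ⟨0, zero_lt_one, δ, by positivity, fun w hw _ => ?_⟩
    by_contra! hlt
    have : w ∈ cDisk ∩ (fun w => ‖fiberDeriv a w‖) ⁻¹' Iic δ := ⟨by simpa [cDisk] using hw, hlt.le⟩
    simp [hemp] at this
  · obtain ⟨w₀, hw₀, hmax⟩ := hE.exists_isMaxOn hne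
      ((memDiskAlg_blaschke ha).1.norm.mono inter_subset_left)
    have hw0 : ‖w₀‖ ≤ 1 := by simpa [cDisk] using hw₀.1
    have hw0' : ‖w₀‖ < 1 := by
      refine lt_of_le_of_ne hw0 fun h => ?_
      have h2 : ‖fiberDeriv a w₁‖ ≤ ‖fiberDeriv a w₀‖ := hmin (by simpa using h)
      have h3 : ‖fiberDeriv a w₀‖ ≤ δ := hw₀.2
      linarith
    refine ⟨‖blaschke a w₀‖, (norm_blaschke_le ha h0 hw0).trans_lt hw0', δ, by positivity,
      fun w hw hlt => ?_⟩
    by_contra! h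
    have : ‖blaschke a w‖ ≤ ‖blaschke a w₀‖ := hmax ⟨by simpa [cDisk] using hw, h.le⟩
    linarith

/-! ### Approximation in the disk algebra -/

/-- Polynomials are dense in the disk algebra: approximate `f(z)` by `f(ρz)` with `ρ < 1`, and the
latter by its Taylor polynomials. -/
theorem exists_polynomial_approx {f : ℂ → ℂ} (hf : MemDiskAlg f) {τ : ℝ} (hτ : 0 < τ) :
    ∃ q : ℂ[X], ∀ z, ‖z‖ ≤ 1 → ‖f z - q.eval z‖ ≤ τ := by
  have huc : UniformContinuousOn f cDisk :=
    (isCompact_closedBall (0 : ℂ) 1).uniformContinuousOn_of_continuous hf.1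
  obtain ⟨δ, hδ, hδf⟩ := Metric.uniformContinuousOn_iff.1 huc (τ / 2) (half_pos hτ)
  have hev : ∀ᶠ r : ℝ in 𝓝[<] 1, r ∈ Ioo (0 : ℝ) 1 ∧ 1 - r < δ := by
    refine Filter.Eventually.and (Ioo_mem_nhdsLT (by norm_num)) ?_
    have : Tendsto (fun r : ℝ => 1 - r) (𝓝[<] 1) (𝓝 (1 - 1)) :=
      (tendsto_const_nhds.sub tendsto_id).mono_left nhdsWithin_le_nhds
    rw [sub_self] at this
    exact this.eventually_lt_const hδ
  obtain ⟨ρ, ⟨hρ0, hρ1⟩, hρδ⟩ := hev.exists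
  have hdc : DiffContOnCl ℂ f (ball 0 ((1 : NNReal) : ℝ)) := by
    refine ⟨by simpa [uDisk] using hf.2, ?_⟩
    rw [NNReal.coe_one, closure_ball _ one_ne_zero]
    exact hf.1
  have hps := hdc.hasFPowerSeriesOnBall one_pos
  set p := cauchyPowerSeries f 0 ((1 : NNReal) : ℝ) with hp
  obtain ⟨ρ', hρ', hρ'1⟩ := exists_between hρ1
  lift ρ' to NNReal using (hρ0.trans hρ').le
  have hunif := hps.tendstoUniformlyOn (r' := ρ') (by exact_mod_cast hρ'1)
  obtain ⟨N, hN⟩ := (Metric.tendstoUniformlyOn_iff.1 hunif (τ / 2) (half_pos hτ)).exists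
  refine ⟨∑ i ∈ Finset.range N, C (p.coeff i * (ρ : ℂ) ^ i) * X ^ i, fun z hz => ?_⟩
  have hnr : ‖(ρ : ℂ) * z‖ ≤ ρ := by
    rw [norm_mul, Complex.norm_real, Real.norm_of_nonneg hρ0.le]
    exact mul_le_of_le_one_right hρ0.le hz
  have h1 : ‖f z - f (ρ * z)‖ < τ / 2 := by
    rw [← dist_eq_norm]
    refine hδf z (by simpa [cDisk] using hz) _ (by simpa [cDisk] using hnr.trans hρ1.le) ?_
    rw [dist_eq_norm, show z - ρ * z = ((1 - ρ : ℝ) : ℂ) * z by push_cast; ring, norm_mul,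
      Complex.norm_real, Real.norm_of_nonneg (by linarith)]
    nlinarith [norm_nonneg z]
  have h2 := hN (ρ * z) (by simpa using hnr.trans_lt hρ')
  rw [zero_add, dist_eq_norm] at h2
  have h3 : p.partialSum N (ρ * z) =
      (∑ i ∈ Finset.range N, C (p.coeff i * (ρ : ℂ) ^ i) * X ^ i : ℂ[X]).eval z := by
    rw [FormalMultilinearSeries.partialSum, eval_finsetSum]
    refine Finset.sum_congr rfl fun i _ => ?_
    rw [FormalMultilinearSeries.apply_eq_pow_smul_coeff]
    simp only [smul_eq_mul, eval_mul, eval_C, eval_pow, eval_X, mul_pow]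
    ring
  rw [h3] at h2
  calc _ = ‖(f z - f (ρ * z)) + (f (ρ * z) - _)‖ := by rw [sub_add_sub_cancel]
    _ ≤ _ := norm_add_le _ _
    _ ≤ τ := by linarith

theorem norm_map_prod_le_pow {L : ℝ} (hL : 0 ≤ L) (s : Multiset ℂ) (f : ℂ → ℂ)
    (hf : ∀ w ∈ s, ‖f w‖ ≤ L) : ‖(s.map f).prod‖ ≤ L ^ s.card := by
  induction s using Multiset.induction_on with
  | empty => simp
  | cons x s ih =>
    rw [Multiset.map_cons, Multiset.prod_cons, norm_mul, Multiset.card_cons, pow_succ']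
    exact mul_le_mul (hf x (Multiset.mem_cons_self x s))
      (ih fun w hw => hf w (Multiset.mem_cons_of_mem hw)) (norm_nonneg _) hL

theorem norm_multiset_prod_sub_le {L τ : ℝ} (hL : 1 ≤ L) (hτ : 0 ≤ τ) (s : Multiset ℂ)
    (f f' : ℂ → ℂ) (hf : ∀ w ∈ s, ‖f w‖ ≤ L) (hf' : ∀ w ∈ s, ‖f' w‖ ≤ L)
    (hd : ∀ w ∈ s, ‖f w - f' w‖ ≤ τ) :
    ‖(s.map f).prod - (s.map f').prod‖ ≤ s.card * L ^ s.card * τ := by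
  induction s using Multiset.induction_on with
  | empty => simp
  | cons x s ih =>
    have hx := Multiset.mem_cons_self x s
    have hs : ∀ w ∈ s, w ∈ x ::ₘ s := fun w hw => Multiset.mem_cons_of_mem hw
    have ih' := ih (fun w hw => hf w (hs w hw)) (fun w hw => hf' w (hs w hw))
      (fun w hw => hd w (hs w hw))
    have hL0 : 0 ≤ L := zero_le_one.trans hL
    have hb := norm_map_prod_le_pow hL0 s f fun w hw => hf w (hs w hw)
    simp only [Multiset.map_cons, Multiset.prod_cons, Multiset.card_cons]
    have e1 : f x * (s.map f).prod - f' x * (s.map f').prod =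
        (f x - f' x) * (s.map f).prod + f' x * ((s.map f).prod - (s.map f').prod) := by ring
    rw [e1]
    calc _ ≤ ‖f x - f' x‖ * ‖(s.map f).prod‖ + ‖f' x‖ * ‖(s.map f).prod - (s.map f').prod‖ := by
          rw [← norm_mul, ← norm_mul]; exact norm_add_le _ _
      _ ≤ τ * L ^ s.card + L * (s.card * L ^ s.card * τ) :=
          add_le_add (mul_le_mul (hd x hx) hb (norm_nonneg _) hτ)
            (mul_le_mul (hf' x hx) ih' (norm_nonneg _) hL0)
      _ ≤ L * (τ * L ^ s.card) + L * (s.card * L ^ s.card * τ) := by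
          have := le_mul_of_one_le_left (a := L) (b := τ * L ^ s.card) (by positivity) hL
          linarith
      _ = _ := by push_cast; ring

theorem memDiskAlg_mul {f f' : ℂ → ℂ} (hf : MemDiskAlg f) (hf' : MemDiskAlg f') :
    MemDiskAlg fun z => f z * f' z := ⟨hf.1.mul hf'.1, hf.2.mul hf'.2⟩

theorem memDiskAlg_eval {F : Fin 2 → ℂ → ℂ} (hF : ∀ i, MemDiskAlg (F i))
    (P : MvPolynomial (Fin 2) ℂ) :
    MemDiskAlg fun z => MvPolynomial.eval (fun i => F i z) P := by
  induction P using MvPolynomial.induction_on with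
  | C c => simpa using ⟨continuousOn_const, differentiableOn_const c⟩
  | add p q hp hq => simpa using ⟨hp.1.add hq.1, hp.2.add hq.2⟩
  | mul_X p i hp => simpa using memDiskAlg_mul hp (hF i)

/-- Maximum principle in the form needed here: a bound near the unit circle is a bound on the
closed disk. -/
theorem norm_le_of_near_circle {k : ℕ} {a : Fin (k + 1) → ℂ} (ha : ∀ j, ‖a j‖ < 1)
    {Φ : ℂ → ℂ} (hΦ : MemDiskAlg Φ) {η ε : ℝ} (hη : η < 1)
    (hb : ∀ z, ‖z‖ < 1 → η < ‖blaschke a z‖ → ‖Φ z‖ ≤ ε) {z : ℂ} (hz : z ∈ cDisk) :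
    ‖Φ z‖ ≤ ε := by
  have hcl : closure (ball (0 : ℂ) 1) = closedBall 0 1 := closure_ball _ one_ne_zero
  refine Complex.norm_le_of_forall_mem_frontier_norm_le (U := ball 0 1) isBounded_ball
    ⟨hΦ.2, by rw [hcl]; exact hΦ.1⟩ (fun w hw => ?_) (by rw [hcl]; exact hz)
  rw [frontier_ball _ one_ne_zero] at hw
  have hw1 : ‖w‖ = 1 := by simpa using hw
  have hwc : w ∈ cDisk := by simp [cDisk, hw1]
  have hne : (𝓝[ball (0 : ℂ) 1] w).NeBot :=
    mem_closure_iff_nhdsWithin_neBot.1 (by rw [hcl]; exact hwc)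
  have hsub : ball (0 : ℂ) 1 ⊆ cDisk := ball_subset_closedBall
  have h1 : Tendsto (fun x => ‖Φ x‖) (𝓝[ball (0 : ℂ) 1] w) (𝓝 ‖Φ w‖) :=
    ((hΦ.1 w hwc).mono hsub).norm
  have h2 : Tendsto (fun x => ‖blaschke a x‖) (𝓝[ball (0 : ℂ) 1] w) (𝓝 ‖blaschke a w‖) :=
    (((memDiskAlg_blaschke ha).1 w hwc).mono hsub).norm
  rw [norm_blaschke_circle ha hw1] at h2
  refine le_of_tendsto h1 ?_
  filter_upwards [h2.eventually_const_lt hη, self_mem_nhdsWithin] with x hx hxb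
  exact hb x (by simpa using hxb) hx

/-- In the interpolation sum over a simple fiber, evaluated at `t = g(z)`, only the term of `z`
survives, and it is `Γ(g)(z) h(z)`. -/
theorem gamma_mul_eq_sum {p : ℂ[X]} (hp : p.Monic) (g h : ℂ → ℂ) (G z : ℂ) (hz : z ∈ p.roots)
    (hd : p.derivative.eval z ≠ 0)
    (hG : G * ((p.roots.erase z).map fun w => z - w).prod =
      ((p.roots.erase z).map fun w => g z - g w).prod) :
    G * h z = ∑ w ∈ p.roots.toFinset,
      h w * ((p.roots.erase w).map fun w' => g z - g w').prod / p.derivative.eval w := by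
  rw [Finset.sum_eq_single z]
  · rw [← hG, ← (IsAlgClosed.splits p).eval_root_derivative hp hz]
    field_simp
  · intro w _ hwz
    have : (0 : ℂ) ∈ (p.roots.erase w).map fun w' => g z - g w' :=
      Multiset.mem_map.2 ⟨z, (Multiset.mem_erase_of_ne hwz.symm).2 hz, sub_self _⟩
    rw [Multiset.prod_eq_zero this]
    simp
  · intro hnot
    exact absurd (Multiset.mem_toFinset.2 hz) hnot

/-- **Theorem E(1).** For `g` in the disk algebra, the closure of `ℂ[B,g]`
in `A(𝔻̄)` contains `Γ(g)·A(𝔻̄)`. -/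
theorem stmt17 {n : ℕ} (hn : 2 ≤ n) (a : Fin n → ℂ) (ha : ∀ j, a j ∈ uDisk)
    (ha0 : a ⟨0, by omega⟩ = 0)
    (g Γg : ℂ → ℂ) (hg : MemDiskAlg g)
    (hΓda : MemDiskAlg Γg) (hΓeq : ∀ z ∈ uDisk, Γg z * calD a id z = calD a g z)
    (h : ℂ → ℂ) (hh : MemDiskAlg h) :
    (fun z => Γg z * h z) ∈ daClosure (algGen2 (blaschke a) g) := by
  obtain ⟨k, rfl⟩ : ∃ k, n = k + 1 := ⟨n - 1, by omega⟩
  have ha1 : ∀ j, ‖a j‖ < 1 := fun j => by simpa [uDisk] using ha j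
  have h0 : a 0 = 0 := ha0
  refine ⟨memDiskAlg_mul hΓda hh, fun ε hε => ?_⟩
  obtain ⟨η, hη, δ, hδ, hsep⟩ := exists_fiberDeriv_bound ha1 h0
  obtain ⟨K₁, hK₁⟩ := (isCompact_closedBall (0 : ℂ) 1).exists_bound_of_continuousOn hg.1
  obtain ⟨K₂, hK₂⟩ := (isCompact_closedBall (0 : ℂ) 1).exists_bound_of_continuousOn hh.1
  set K : ℝ := max 1 (max K₁ K₂) with hK
  have hK1 : 1 ≤ K := le_max_left _ _
  have hgK : ∀ w, ‖w‖ ≤ 1 → ‖g w‖ ≤ K := fun w hw =>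
    (hK₁ w (by simpa using hw)).trans ((le_max_left _ _).trans (le_max_right _ _))
  have hhK : ∀ w, ‖w‖ ≤ 1 → ‖h w‖ ≤ K := fun w hw =>
    (hK₂ w (by simpa using hw)).trans ((le_max_right _ _).trans (le_max_right _ _))
  set L : ℝ := 3 * K with hL
  have hL1 : 1 ≤ L := by linarith
  -- `A * τ` bounds the change of one summand numerator when `g`, `h` move by at most `τ`.
  set A : ℝ := K * (k * L ^ k) + L ^ k with hA
  have hA0 : 0 < A := by positivity
  obtain ⟨τ, hτ0, hτ1, hτε⟩ : ∃ τ : ℝ, 0 < τ ∧ τ ≤ 1 ∧ (k + 1) * (A * τ / δ) ≤ ε := by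
    refine ⟨min 1 (ε * δ / ((k + 1) * A)), by positivity, min_le_left _ _, ?_⟩
    have h1 := min_le_right 1 (ε * δ / ((k + 1) * A))
    rw [le_div_iff₀ (by positivity)] at h1
    rw [← mul_div_assoc, div_le_iff₀ hδ]
    linarith
  obtain ⟨gq, hgq⟩ := exists_polynomial_approx hg hτ0
  obtain ⟨hq, hhq⟩ := exists_polynomial_approx hh hτ0
  obtain ⟨P, hP⟩ := exists_interp_poly a (fun j => (starRingEnd ℂ) (a j)) (by simp [h0])
    ((-1) ^ (k + 1)) gq hq
  have hB := memDiskAlg_blaschke ha1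
  have hF : ∀ i, MemDiskAlg (![blaschke a, g] i) := by
    intro i; fin_cases i
    · exact hB
    · exact hg
  refine ⟨fun z => MvPolynomial.eval (fun i => ![blaschke a, g] i z) P, ⟨P, fun _ => rfl⟩, ?_⟩
  have hΦ : MemDiskAlg fun z => Γg z * h z - MvPolynomial.eval (fun i => ![blaschke a, g] i z) P :=
    ⟨(memDiskAlg_mul hΓda hh).1.sub (memDiskAlg_eval hF P).1,
      (memDiskAlg_mul hΓda hh).2.sub (memDiskAlg_eval hF P).2⟩
  intro z hz
  refine norm_le_of_near_circle ha1 hΦ hη (fun z hz hzη => ?_) hz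
  have hBz : ‖blaschke a z‖ < 1 := (norm_blaschke_le ha1 h0 hz.le).trans_lt hz
  set p := fiberPoly a (fun j => (starRingEnd ℂ) (a j)) ((-1) ^ (k + 1) * blaschke a z) with hp
  obtain ⟨hpm, hpd⟩ : p.Monic ∧ p.natDegree = k + 1 := fiberPoly_monic _ _ _ (by simp [h0])
  have hsp : p.Splits := IsAlgClosed.splits p
  have hroot : ∀ w ∈ p.roots, ‖w‖ < 1 ∧ blaschke a w = blaschke a z := fun w hw =>
    root_mem ha1 hBz (isRoot_of_mem_roots hw)
  have hder : ∀ w ∈ p.roots, δ ≤ ‖p.derivative.eval w‖ := by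
    intro w hw
    obtain ⟨hw1, hwB⟩ := hroot w hw
    have := hsep w hw1.le (by rw [hwB]; exact hzη)
    rwa [fiberDeriv, hwB] at this
  have hcard : p.roots.card = k + 1 := by rw [← hsp.natDegree_eq_card_roots, hpd]
  have hnd : p.roots.Nodup := by
    rw [Multiset.nodup_iff_count_le_one]
    intro w
    by_contra! hc
    rw [count_roots] at hc
    have hw : w ∈ p.roots := by
      rw [← Multiset.count_pos, count_roots]; omega
    have := ((one_lt_rootMultiplicity_iff_isRoot hpm.ne_zero).1 hc).2
    have h2 := hder w hw
    rw [this.eq_zero, norm_zero] at h2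
    linarith
  have hzr : z ∈ p.roots := (mem_roots hpm.ne_zero).2 (isRoot_self ha1 hz.le)
  have hΓ := hΓeq z (by simpa [uDisk] using hz)
  rw [calD, calD, fiberMS_eq] at hΓ
  have hdz : p.derivative.eval z ≠ 0 := norm_pos_iff.1 (hδ.trans_le (hder z hzr))
  have hsum := gamma_mul_eq_sum hpm g h (Γg z) z hzr hdz hΓ
  have hPz := hP (fun i => ![blaschke a, g] i z) hnd
  change ‖Γg z * h z - MvPolynomial.eval (fun i => ![blaschke a, g] i z) P‖ ≤ ε
  rw [hsum, hPz]
  change ‖_ - ∑ w ∈ p.roots.toFinset, hq.eval w *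
    ((p.roots.erase w).map fun w' => g z - gq.eval w').prod / p.derivative.eval w‖ ≤ ε
  rw [← Finset.sum_sub_distrib]
  refine (norm_sum_le_of_le (n := fun _ => A * τ / δ) _ fun w hw => ?_).trans ?_
  · have hw' : w ∈ p.roots := by simpa using hw
    obtain ⟨hw1, -⟩ := hroot w hw'
    have hce : (p.roots.erase w).card = k := by
      rw [Multiset.card_erase_of_mem hw', hcard]; rfl
    have hin : ∀ w' ∈ p.roots.erase w, ‖w'‖ ≤ 1 := fun w' h' =>
      (hroot w' (Multiset.mem_of_mem_erase h')).1.le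
    have b1 : ∀ w' ∈ p.roots.erase w, ‖g z - g w'‖ ≤ L := fun w' h' => by
      linarith [norm_sub_le (g z) (g w'), hgK z hz.le, hgK w' (hin w' h')]
    have b3 : ∀ w' ∈ p.roots.erase w, ‖(g z - g w') - (g z - gq.eval w')‖ ≤ τ := fun w' h' => by
      rw [sub_sub_sub_cancel_left, norm_sub_rev]
      exact hgq w' (hin w' h')
    have b2 : ∀ w' ∈ p.roots.erase w, ‖g z - gq.eval w'‖ ≤ L := fun w' h' => by
      have e1 := norm_sub_le (g z) (g w')
      have e2 := norm_add_le (g z - g w') (g w' - gq.eval w')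
      rw [sub_add_sub_cancel] at e2
      linarith [hgK z hz.le, hgK w' (hin w' h'), hgq w' (hin w' h')]
    have hdiff := norm_multiset_prod_sub_le hL1 hτ0.le _ _ _ b1 b2 b3
    have hbd := norm_map_prod_le_pow (zero_le_one.trans hL1) _ _ b2
    rw [hce] at hdiff hbd
    set Q := ((p.roots.erase w).map fun w' => g z - g w').prod
    set Q' := ((p.roots.erase w).map fun w' => g z - gq.eval w').prod
    rw [← sub_div, norm_div]
    refine div_le_div₀ (by positivity) ?_ hδ (hder w hw')
    rw [show h w * Q - hq.eval w * Q' = h w * (Q - Q') + (h w - hq.eval w) * Q' by ring]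
    calc _ ≤ ‖h w‖ * ‖Q - Q'‖ + ‖h w - hq.eval w‖ * ‖Q'‖ := by
          rw [← norm_mul, ← norm_mul]; exact norm_add_le _ _
      _ ≤ K * (k * L ^ k * τ) + τ * L ^ k :=
          add_le_add (mul_le_mul (hhK w hw1.le) hdiff (norm_nonneg _) (by positivity))
            (mul_le_mul (hhq w hw1.le) hbd (norm_nonneg _) hτ0.le)
      _ = A * τ := by rw [hA]; ring
  · rw [Finset.sum_const, Multiset.toFinset_card_of_nodup hnd, hcard, nsmul_eq_mul]
    push_cast
    exact hτε
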